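/- Let S = {P₁, …, Pₘ} be a set of distinct non-identity n-qubit Pauli operators with +1 phase, let h₁, …, hₘ be real numbers not all zero, and let H = Σᵢ hᵢ Pᵢ. Then the minimum of ‖H − H′‖/‖H‖ over all noncontextual Hermitian operators H′, where ‖·‖ is the Hilbert–Schmidt (Frobenius) norm, equals the minimum of √(Σ_{Pᵢ ∈ S′} hᵢ² / Σᵢ hᵢ²) over all subsets S′ ⊆ S such that S ∖ S′ is noncontextual, and this minimum is achieved by taking H′ = Σ_{Pᵢ ∈ S ∖ S′} hᵢ Pᵢ for a minimizing subset S′. -/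

import Mathlib

/-!
The Pauli operators `σ_f` are orthogonal for the Hilbert–Schmidt inner product, each of squared
norm `2 ^ n` (the inner product of two tensor products factors over the qubits), so
`‖∑ a_f σ_f‖² = 2 ^ n ∑ a_f²` for real coefficients (`frobNorm_sum_pauliTensor`).

If `H'` is a combination of a noncontextual set `Q`, let `T` be the set of terms of `H` outside `Q`.
A subset of a noncontextual set is noncontextual (`Contextual.mono`), so the terms outside `T` form a
noncontextual set; and `H - H'` has coefficient `h i` at each `P i` with `i ∈ T`, so
`‖H - H'‖² ≥ 2 ^ n ∑_{i ∈ T} h i ²` (`exists_le_frobNorm_sub`). Conversely, removing the terms in an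
admissible `T` leaves a noncontextual operator at exactly this distance from `H`. Both minima
therefore agree, and they exist because there are finitely many `T` and at least one is admissible:
removing every term leaves the empty set, over which every determining tree has label `1 ≠ -1`.
-/

open Matrix

/-- Index type for `n` qubits: `Fin n → Fin 2` has cardinality `2^n`. -/
abbrev QubitIdx (n : ℕ) := Fin n → Fin 2

/-- `2^n × 2^n` complex matrices. -/
abbrev Mat (n : ℕ) := Matrix (QubitIdx n) (QubitIdx n) ℂ

/-- The four single-qubit Pauli matrices `I, X, Y, Z`. -/
noncomputable def pauliMat : Fin 4 → Matrix (Fin 2) (Fin 2) ℂ :=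
  ![1, !![0, 1; 1, 0], !![0, -Complex.I; Complex.I, 0], !![1, 0; 0, -1]]

/-- The tensor product `P₁ ⊗ ⋯ ⊗ Pₙ` of single-qubit Pauli matrices. -/
noncomputable def pauliTensor (n : ℕ) (f : Fin n → Fin 4) : Mat n :=
  fun i k => ∏ j, pauliMat (f j) (i j) (k j)

/-- An `n`-qubit Pauli operator: `ε • P₁ ⊗ ⋯ ⊗ Pₙ` with `ε ∈ {1, -1}`. -/
def IsPauli (n : ℕ) (M : Mat n) : Prop :=
  ∃ (ε : ℂ) (f : Fin n → Fin 4), (ε = 1 ∨ ε = -1) ∧ M = ε • pauliTensor n f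

/-- Two operators anticommute. -/
def PAntiCommute {n : ℕ} (A B : Mat n) : Prop := A * B = -(B * A)

/-- Finite rooted trees whose nodes are labeled by `2^n × 2^n` matrices.
A `leaf` has no children; a `node` has a (finite) list of children. -/
inductive PTree (n : ℕ) : Type
  | leaf : Mat n → PTree n
  | node : Mat n → List (PTree n) → PTree n

namespace PTree

variable {n : ℕ}

/-- The label of the root of the tree. -/
def label : PTree n → Mat n
  | leaf M => M
  | node M _ => M

mutual
/-- The multiset of leaf labels of the tree. -/
def leaves : PTree n → Multiset (Mat n)
  | .leaf M => {M}
  | .node _ cs => leavesList cs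
/-- The multiset of leaf labels of a list of trees. -/
def leavesList : List (PTree n) → Multiset (Mat n)
  | [] => 0
  | c :: cs => c.leaves + leavesList cs
end

mutual
/-- The list of leaf labels of the tree in depth-first (left-to-right) order. -/
def leafList : PTree n → List (Mat n)
  | .leaf M => [M]
  | .node _ cs => leafListList cs
/-- The list of leaf labels of a list of trees, in depth-first order. -/
def leafListList : List (PTree n) → List (Mat n)
  | [] => []
  | c :: cs => c.leafList ++ leafListList cs
end

mutual
/-- The multiset of all node labels of the tree. -/
def nodeLabels : PTree n → Multiset (Mat n)
  | .leaf M => {M}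
  | .node M cs => M ::ₘ nodeLabelsList cs
/-- The multiset of all node labels of a list of trees. -/
def nodeLabelsList : List (PTree n) → Multiset (Mat n)
  | [] => 0
  | c :: cs => c.nodeLabels + nodeLabelsList cs
end

/-- The multiset of labels of all nodes at depth ≥ 2, i.e. strictly below
the children of the root. -/
def deepLabels : PTree n → Multiset (Mat n)
  | .leaf _ => 0
  | .node _ cs => (cs.map fun c =>
      match c with
      | .leaf _ => (0 : Multiset (Mat n))
      | .node _ cs' => nodeLabelsList cs').sum

/-- A valid determining tree over a set `S`: every leaf is labeled by an
element of `S`, every node is labeled by a Pauli operator, and for every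
internal node, the labels of its children pairwise commute and the label of
the node is the matrix product of the labels of its children. -/
inductive Valid (S : Set (Mat n)) : PTree n → Prop
  | leaf {M : Mat n} : M ∈ S → Valid S (PTree.leaf M)
  | node {M : Mat n} {cs : List (PTree n)} :
      IsPauli n M →
      M = (cs.map label).prod →
      cs.Pairwise (fun a b => Commute a.label b.label) →
      (∀ c ∈ cs, Valid S c) →
      Valid S (PTree.node M cs)

/-- Every internal node of the tree has at most two children. -/
inductive Binary : PTree n → Prop
  | leaf (M : Mat n) : Binary (PTree.leaf M)
  | node (M : Mat n) (cs : List (PTree n)) :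
      cs.length ≤ 2 → (∀ c ∈ cs, Binary c) → Binary (PTree.node M cs)

open scoped Classical in
/-- The determining set of a tree: the set of operators occurring with odd
total multiplicity among its leaves. -/
noncomputable def detSet (τ : PTree n) : Set (Mat n) :=
  {M | Odd (τ.leaves.count M)}

end PTree

/-- `τ` is a determining tree for `A` over `S`. -/
def IsDetTree {n : ℕ} (S : Set (Mat n)) (A : Mat n) (τ : PTree n) : Prop :=
  PTree.Valid S τ ∧ τ.label = A

/-- A set `S` of Pauli operators is contextual if for some Pauli operator `A`
there are determining trees for `A` and for `-A` over `S` with identical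
determining sets. -/
def Contextual (n : ℕ) (S : Set (Mat n)) : Prop :=
  ∃ (A : Mat n) (τ τ' : PTree n), IsPauli n A ∧
    IsDetTree S A τ ∧ IsDetTree S (-A) τ' ∧ τ.detSet = τ'.detSet

/-- The Hilbert–Schmidt (Frobenius) norm of a matrix. -/
noncomputable def frobNorm {n : ℕ} (M : Mat n) : ℝ :=
  Real.sqrt (∑ i, ∑ j, ‖M i j‖ ^ 2)

/-- A Hermitian `2^n × 2^n` matrix is noncontextual if it is a real linear
combination of the operators in some noncontextual set of `+1`-phase n-qubit
Pauli operators. -/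
def NoncontextualHermitian (n : ℕ) (H' : Mat n) : Prop :=
  ∃ (m : ℕ) (Q : Fin m → Mat n) (c : Fin m → ℝ),
    (∀ i, ∃ f : Fin n → Fin 4, Q i = pauliTensor n f) ∧
    ¬ Contextual n (Set.range Q) ∧
    H' = ∑ i, (c i : ℂ) • Q i

/-! ### Noncontextual sets -/

theorem PTree.Valid.mono {n : ℕ} {S S' : Set (Mat n)} (hS : S ⊆ S') {τ : PTree n}
    (hτ : PTree.Valid S τ) : PTree.Valid S' τ := by
  induction hτ with
  | leaf hM => exact .leaf (hS hM)
  | node h1 h2 h3 _ ih => exact .node h1 h2 h3 ih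

theorem Contextual.mono {n : ℕ} {S S' : Set (Mat n)} (hS : S ⊆ S') (hc : Contextual n S) :
    Contextual n S' := by
  obtain ⟨A, τ, τ', hA, h1, h2, h3⟩ := hc
  exact ⟨A, τ, τ', hA, ⟨h1.1.mono hS, h1.2⟩, ⟨h2.1.mono hS, h2.2⟩, h3⟩

/-- Over the empty set every branch ends in an internal node without children, whose label is the
empty product. -/
theorem PTree.Valid.label_eq_one {n : ℕ} {τ : PTree n} (hτ : PTree.Valid ∅ τ) : τ.label = 1 := by
  induction hτ with
  | leaf hM => exact hM.elim
  | node _ h2 _ _ ih =>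
    rw [PTree.label, h2]
    apply List.prod_eq_one
    intro x hx
    obtain ⟨c, hc, rfl⟩ := List.mem_map.1 hx
    exact ih c hc

theorem not_contextual_empty (n : ℕ) : ¬ Contextual n ∅ := by
  rintro ⟨A, τ, τ', -, ⟨h1, rfl⟩, ⟨h2, h3⟩, -⟩
  rw [h1.label_eq_one, h2.label_eq_one] at h3
  have := congrFun (congrFun h3 0) 0
  rw [Matrix.neg_apply, Matrix.one_apply_eq] at this
  norm_num at this

/-! ### Orthogonality of the Pauli operators -/

theorem sum_star_pauliMat_mul (s t : Fin 4) :
    ∑ a, ∑ b, star (pauliMat s a b) * pauliMat t a b = if s = t then 2 else 0 := by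
  fin_cases s <;> fin_cases t <;> simp [pauliMat, Fin.sum_univ_two, one_add_one_eq_two]

theorem sum_star_pauliTensor_mul {n : ℕ} (f g : Fin n → Fin 4) :
    ∑ i, ∑ k, star (pauliTensor n f i k) * pauliTensor n g i k = if f = g then 2 ^ n else 0 := by
  -- Distributing the product over qubits of the one-qubit double sums gives the left-hand side.
  have key : ∏ j, ∑ a, ∑ b, star (pauliMat (f j) a b) * pauliMat (g j) a b =
      ∑ i, ∑ k, star (pauliTensor n f i k) * pauliTensor n g i k := by
    simp only [pauliTensor, star_prod, ← Finset.prod_mul_distrib]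
    rw [Finset.prod_univ_sum, Fintype.piFinset_univ]
    refine Finset.sum_congr rfl fun i _ => ?_
    rw [Finset.prod_univ_sum, Fintype.piFinset_univ]
  rw [← key]
  simp only [sum_star_pauliMat_mul]
  split_ifs with hfg
  · simp [hfg]
  · obtain ⟨j, hj⟩ := Function.ne_iff.1 hfg
    exact Finset.prod_eq_zero (Finset.mem_univ j) (if_neg hj)

theorem frobNorm_sq {n : ℕ} (M : Mat n) : frobNorm M ^ 2 = ∑ i, ∑ j, ‖M i j‖ ^ 2 :=
  Real.sq_sqrt (by positivity)

/-- Parseval's identity in the Pauli basis, for real coefficients. -/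
theorem frobNorm_sum_pauliTensor {n : ℕ} (a : (Fin n → Fin 4) → ℝ) :
    frobNorm (∑ f, (a f : ℂ) • pauliTensor n f) ^ 2 = 2 ^ n * ∑ f, a f ^ 2 := by
  rw [← Complex.ofReal_inj, frobNorm_sq]
  push_cast
  have expand : ∀ i k, ((‖(∑ f, (a f : ℂ) • pauliTensor n f) i k‖ : ℂ)) ^ 2 =
      ∑ f, ∑ g, (a f * a g : ℂ) * (star (pauliTensor n f i k) * pauliTensor n g i k) := by
    intro i k
    rw [← Complex.conj_mul']
    simp only [Matrix.sum_apply, Matrix.smul_apply, smul_eq_mul, map_sum, map_mul,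
      Complex.conj_ofReal, Finset.sum_mul_sum, Complex.star_def]
    refine Finset.sum_congr rfl fun f _ => Finset.sum_congr rfl fun g _ => by ring
  simp only [expand]
  calc _ = ∑ f, ∑ g, (a f * a g : ℂ) *
        ∑ i, ∑ k, star (pauliTensor n f i k) * pauliTensor n g i k := by
        simp only [Finset.mul_sum]
        rw [← Finset.sum_product', Finset.sum_comm]
        refine Finset.sum_congr rfl fun f _ => ?_
        rw [Finset.sum_comm]
        refine Finset.sum_congr rfl fun g _ => ?_
        rw [← Finset.sum_product']
    _ = _ := by
        simp only [sum_star_pauliTensor_mul, mul_ite, mul_zero, Finset.sum_ite_eq,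
          Finset.mem_univ, if_true, Finset.mul_sum]
        refine Finset.sum_congr rfl fun f _ => by ring

/-! ### Coefficients in the Pauli basis -/

/-- The coefficient at `pauliTensor n f` of `∑ i, h i • pauliTensor n (p i)`; terms with the same
index are added up. -/
def pauliCoeff {n m : ℕ} (p : Fin m → Fin n → Fin 4) (h : Fin m → ℝ) (f : Fin n → Fin 4) : ℝ :=
  ∑ i, if p i = f then h i else 0

theorem sum_pauliCoeff {n m : ℕ} (p : Fin m → Fin n → Fin 4) (h : Fin m → ℝ) :
    ∑ f, (pauliCoeff p h f : ℂ) • pauliTensor n f = ∑ i, (h i : ℂ) • pauliTensor n (p i) := by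
  simp only [pauliCoeff, Complex.ofReal_sum, Finset.sum_smul]
  rw [Finset.sum_comm]
  refine Finset.sum_congr rfl fun i _ => ?_
  rw [Finset.sum_eq_single (p i)]
  · simp
  · intro f _ hf
    simp [hf.symm]
  · simp

theorem pauliCoeff_apply {n m : ℕ} {p : Fin m → Fin n → Fin 4} (hp : Function.Injective p)
    (h : Fin m → ℝ) (i : Fin m) : pauliCoeff p h (p i) = h i := by
  simp [pauliCoeff, hp.eq_iff]

theorem pauliCoeff_of_notMem {n m : ℕ} {p : Fin m → Fin n → Fin 4} (h : Fin m → ℝ)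
    {f : Fin n → Fin 4} (hf : f ∉ Set.range p) : pauliCoeff p h f = 0 :=
  Finset.sum_eq_zero fun i _ => if_neg fun hi => hf ⟨i, hi⟩

theorem frobNorm_sum_of_injective {n m : ℕ} {p : Fin m → Fin n → Fin 4}
    (hp : Function.Injective p) (h : Fin m → ℝ) :
    frobNorm (∑ i, (h i : ℂ) • pauliTensor n (p i)) ^ 2 = 2 ^ n * ∑ i, h i ^ 2 := by
  rw [← sum_pauliCoeff, frobNorm_sum_pauliTensor]
  congr 1
  rw [← Finset.sum_subset (Finset.subset_univ (Finset.univ.image p)), Finset.sum_image hp.injOn]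
  · simp only [pauliCoeff_apply hp]
  · intro f _ hf
    rw [pauliCoeff_of_notMem h (by simpa using hf), zero_pow two_ne_zero]

/-! ### The two bounds -/

/-- Any noncontextual operator is at least as far from `H` as the removal of a suitable set `T` of
terms, namely those absent from the noncontextual operator. -/
theorem exists_le_frobNorm_sub {n m : ℕ} {p : Fin m → Fin n → Fin 4}
    (hp : Function.Injective p) (h : Fin m → ℝ) {H' : Mat n} (hH' : NoncontextualHermitian n H') :
    ∃ T : Finset (Fin m), ¬ Contextual n ((fun i => pauliTensor n (p i)) '' {i | i ∉ T}) ∧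
      2 ^ n * ∑ i ∈ T, h i ^ 2 ≤
        frobNorm (∑ i, (h i : ℂ) • pauliTensor n (p i) - H') ^ 2 := by
  classical
  obtain ⟨k, Q, c, hQ, hnc, rfl⟩ := hH'
  choose q hq using hQ
  refine ⟨Finset.univ.filter fun i => p i ∉ Set.range q, fun hc => hnc (hc.mono ?_), ?_⟩
  · rintro _ ⟨i, hi, rfl⟩
    have hi : p i ∈ Set.range q := by simpa using hi
    obtain ⟨j, hj⟩ := hi
    exact ⟨j, by rw [hq, hj]⟩
  · have hdiff : ∑ i, (h i : ℂ) • pauliTensor n (p i) - ∑ j, (c j : ℂ) • Q j =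
        ∑ f, ((pauliCoeff p h f - pauliCoeff q c f : ℝ) : ℂ) • pauliTensor n f := by
      simp only [hq, ← sum_pauliCoeff, ← Finset.sum_sub_distrib, ← sub_smul, Complex.ofReal_sub]
    rw [hdiff, frobNorm_sum_pauliTensor]
    gcongr
    calc _ = ∑ i ∈ (Finset.univ.filter fun i => p i ∉ Set.range q),
          (pauliCoeff p h (p i) - pauliCoeff q c (p i)) ^ 2 := by
          refine Finset.sum_congr rfl fun i hi => ?_
          rw [pauliCoeff_apply hp, pauliCoeff_of_notMem c (Finset.mem_filter.1 hi).2, sub_zero]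
      _ = ∑ f ∈ (Finset.univ.filter fun i => p i ∉ Set.range q).image p,
          (pauliCoeff p h f - pauliCoeff q c f) ^ 2 := by
          rw [Finset.sum_image hp.injOn]
      _ ≤ _ := Finset.sum_le_sum_of_subset_of_nonneg (Finset.subset_univ _)
          fun _ _ _ => sq_nonneg _

theorem noncontextualHermitian_sum_compl {n m : ℕ} (p : Fin m → Fin n → Fin 4) (h : Fin m → ℝ)
    (T : Finset (Fin m))
    (hT : ¬ Contextual n ((fun i => pauliTensor n (p i)) '' {i | i ∉ T})) :
    NoncontextualHermitian n (∑ i ∈ Tᶜ, (h i : ℂ) • pauliTensor n (p i)) := by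
  let e := Tᶜ.equivFin
  refine ⟨Tᶜ.card, fun j => pauliTensor n (p (e.symm j)), fun j => h (e.symm j),
    fun j => ⟨_, rfl⟩, fun hc => hT (hc.mono ?_), ?_⟩
  · rintro _ ⟨j, rfl⟩
    exact ⟨e.symm j, Finset.mem_compl.1 (e.symm j).2, rfl⟩
  · rw [← Finset.sum_coe_sort]
    exact (Equiv.sum_comp e.symm
      (fun i : {x // x ∈ Tᶜ} => (h i : ℂ) • pauliTensor n (p i))).symm

theorem frobNorm_sub_sum_compl {n m : ℕ} {p : Fin m → Fin n → Fin 4}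
    (hp : Function.Injective p) (h : Fin m → ℝ) (T : Finset (Fin m)) :
    frobNorm (∑ i, (h i : ℂ) • pauliTensor n (p i) - ∑ i ∈ Tᶜ, (h i : ℂ) • pauliTensor n (p i)) ^ 2
      = 2 ^ n * ∑ i ∈ T, h i ^ 2 := by
  have hdiff : ∑ i, (h i : ℂ) • pauliTensor n (p i) - ∑ i ∈ Tᶜ, (h i : ℂ) • pauliTensor n (p i) =
      ∑ i, ((if i ∈ T then h i else 0 : ℝ) : ℂ) • pauliTensor n (p i) := by
    rw [sub_eq_iff_eq_add, ← Finset.sum_add_sum_compl T]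
    congr 1
    rw [← Finset.sum_subset (Finset.subset_univ T)]
    · exact Finset.sum_congr rfl fun i hi => by rw [if_pos hi]
    · intro i _ hi
      simp [hi]
  rw [hdiff, frobNorm_sum_of_injective hp]
  simp [ite_pow]

/-- For `H = Σᵢ hᵢ Pᵢ` with distinct non-identity `+1`-phase
Pauli terms and coefficients not all zero, the minimum of `‖H − H′‖/‖H‖` over
noncontextual Hermitian `H′` (Frobenius norm) equals the minimum of
`√(Σ_{Pᵢ∈S′} hᵢ² / Σᵢ hᵢ²)` over all subsets `S′` whose complement is
noncontextual, and it is achieved by `H′ = Σ_{Pᵢ∉S′} hᵢ Pᵢ` for a minimizing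
subset `S′`. -/
theorem contextual_separation_eq {n m : ℕ} (P : Fin m → Mat n)
    (hP : ∀ i, ∃ f : Fin n → Fin 4, P i = pauliTensor n f)
    (hPne : ∀ i, P i ≠ 1) (hPinj : Function.Injective P)
    (h : Fin m → ℝ) (hh : h ≠ 0)
    (H : Mat n) (hH : H = ∑ i, (h i : ℂ) • P i) :
    ∃ S' : Finset (Fin m),
      ¬ Contextual n (P '' {i | i ∉ S'}) ∧
      IsLeast {r : ℝ | ∃ T : Finset (Fin m),
          ¬ Contextual n (P '' {i | i ∉ T}) ∧
          r = Real.sqrt ((∑ i ∈ T, h i ^ 2) / ∑ i, h i ^ 2)}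
        (Real.sqrt ((∑ i ∈ S', h i ^ 2) / ∑ i, h i ^ 2)) ∧
      IsLeast {r : ℝ | ∃ H' : Mat n, NoncontextualHermitian n H' ∧
          r = frobNorm (H - H') / frobNorm H}
        (Real.sqrt ((∑ i ∈ S', h i ^ 2) / ∑ i, h i ^ 2)) ∧
      frobNorm (H - ∑ i ∈ S'ᶜ, (h i : ℂ) • P i) / frobNorm H
        = Real.sqrt ((∑ i ∈ S', h i ^ 2) / ∑ i, h i ^ 2) := by
  classical
  choose p hp using hP
  obtain rfl : P = fun i => pauliTensor n (p i) := funext hp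
  have hpinj : Function.Injective p := fun i j hij => hPinj (by simp only [hij])
  subst hH
  -- Squaring reduces each ratio of norms to the corresponding ratio of squares.
  have ratio : ∀ D : Mat n,
      frobNorm D / frobNorm (∑ i, (h i : ℂ) • pauliTensor n (p i)) =
        Real.sqrt (frobNorm D ^ 2 / (2 ^ n * ∑ i, h i ^ 2)) := by
    intro D
    rw [← frobNorm_sum_of_injective hpinj, ← div_pow, Real.sqrt_sq]
    exact div_nonneg (Real.sqrt_nonneg _) (Real.sqrt_nonneg _)
  have hpow : (2 : ℝ) ^ n ≠ 0 := by positivity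
  have attained : ∀ T : Finset (Fin m),
      frobNorm (∑ i, (h i : ℂ) • pauliTensor n (p i) -
        ∑ i ∈ Tᶜ, (h i : ℂ) • pauliTensor n (p i)) /
          frobNorm (∑ i, (h i : ℂ) • pauliTensor n (p i)) =
        Real.sqrt ((∑ i ∈ T, h i ^ 2) / ∑ i, h i ^ 2) := by
    intro T
    rw [ratio, frobNorm_sub_sum_compl hpinj, mul_div_mul_left _ _ hpow]
  obtain ⟨S', hS', hmin⟩ := Finset.exists_min_image
    (Finset.univ.filter fun T : Finset (Fin m) =>
      ¬ Contextual n ((fun i => pauliTensor n (p i)) '' {i | i ∉ T}))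
    (fun T => ∑ i ∈ T, h i ^ 2) ⟨Finset.univ, by simpa using not_contextual_empty n⟩
  replace hS' := (Finset.mem_filter.1 hS').2
  replace hmin : ∀ T : Finset (Fin m),
      ¬ Contextual n ((fun i => pauliTensor n (p i)) '' {i | i ∉ T}) →
        ∑ i ∈ S', h i ^ 2 ≤ ∑ i ∈ T, h i ^ 2 :=
    fun T hT => hmin T (Finset.mem_filter.2 ⟨Finset.mem_univ _, hT⟩)
  refine ⟨S', hS', ⟨⟨S', hS', rfl⟩, ?_⟩, ⟨⟨_, noncontextualHermitian_sum_compl p h S' hS',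
    (attained S').symm⟩, ?_⟩, attained S'⟩
  · rintro _ ⟨T, hT, rfl⟩
    have := hmin T hT
    gcongr
  · rintro _ ⟨H', hH', rfl⟩
    obtain ⟨T, hT, hle⟩ := exists_le_frobNorm_sub hpinj h hH'
    rw [ratio, ← mul_div_mul_left _ _ hpow]
    have := hmin T hT
    refine Real.sqrt_le_sqrt (div_le_div_of_nonneg_right (le_trans ?_ hle) (by positivity))
    gcongr
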